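/- For any ℝ^d-valued random variable θ (defined on an arbitrary probability space), E‖θ − θ*‖²_H ≤ (4σ/(1−η̃))·E[f(θ) − f(θ*)] + (10/(1−η̃)²)·E[(f(θ) − f(θ*))²], where both sides may be infinite. -/

import Mathlib

/-!
The inequality holds pointwise in `θ`; integrating it over `P₂` gives the theorem.

Write `q = ‖θ - θ*‖²_H`, `r = √(σ² + q)` and `A = 1 - η̃ = E[exp (-b² / (2σ²))]`. The residual
`y - ⟨x, θ⟩` is `u + b` with `u ∼ N(0, r²)` independent of `b`, so `f(θ) = E|r Z + b|` with `Z`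
standard Gaussian independent of `b` (`fLoss_eq`), and `f(θ*) = E|σ Z + b|`.

The map `r ↦ E|r Z + b|` is convex, and its slope at `r = σ` is
`E[Z sign(σ Z + b)] = √(2/π) A` (`integral_sign_gaussian`). The tangent line inequality therefore
gives `D := f(θ) - f(θ*) ≥ √(2/π) A (r - σ)` (`gaussian_abs_gap`). As `√(2/π) ≥ 1/2`, this implies
`r - σ ≤ 2D/A`, whence `q = r² - σ² = 2σ(r - σ) + (r - σ)² ≤ 4σ D/A + 4 D²/A²`
(`sq_le_of_gap`).
-/


open MeasureTheory ProbabilityTheory Real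
open scoped RealInnerProductSpace ENNReal

noncomputable section

/-- Euclidean space `ℝ^d`. -/
abbrev Vec (d : ℕ) := EuclideanSpace ℝ (Fin d)

/-- The expected `ℓ¹` loss `f(θ) = E |y - ⟨x, θ⟩|` where `y = ⟨x, θ*⟩ + ε + b`. -/
noncomputable def fLoss {d : ℕ} {Ω : Type} [MeasurableSpace Ω] (P : Measure Ω)
    (x : Ω → Vec d) (ε b : Ω → ℝ) (θs θ : Vec d) : ℝ :=
  ∫ ω, |⟪x ω, θs⟫ + ε ω + b ω - ⟪x ω, θ⟫| ∂P

/-- `σ_θ = ‖θ - θ*‖_H = √⟨θ - θ*, H (θ - θ*)⟩`. -/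
noncomputable def sigTh {d : ℕ} (H : Matrix (Fin d) (Fin d) ℝ) (θs θ : Vec d) : ℝ :=
  Real.sqrt ⟪θ - θs, Matrix.toEuclideanLin H (θ - θs)⟫

/-- The effective outlier proportion `η̃ = 1 - E[exp (-b² / (2σ²))]`. -/
noncomputable def etaT {Ω : Type} [MeasurableSpace Ω] (P : Measure Ω) (b : Ω → ℝ)
    (σ : ℝ) : ℝ :=
  1 - ∫ ω, Real.exp (-(b ω) ^ 2 / (2 * σ ^ 2)) ∂P

/-- `α(z) = √(2/π) · (σ² + z²)^(-1/2) · E[exp (-b² / (2 (σ² + z²)))]`. -/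
noncomputable def alphaF {Ω : Type} [MeasurableSpace Ω] (P : Measure Ω) (b : Ω → ℝ)
    (σ z : ℝ) : ℝ :=
  Real.sqrt (2 / π) * (Real.sqrt (σ ^ 2 + z ^ 2))⁻¹ *
    ∫ ω, Real.exp (-(b ω) ^ 2 / (2 * (σ ^ 2 + z ^ 2))) ∂P

/-- The Gauss error function. -/
noncomputable def erf (t : ℝ) : ℝ :=
  2 / Real.sqrt π * ∫ u in (0:ℝ)..t, Real.exp (-u ^ 2)

lemma hasDerivAt_neg_exp (z : ℝ) :
    HasDerivAt (fun z : ℝ => -exp (-(1 / 2) * z ^ 2)) (z * exp (-(1 / 2) * z ^ 2)) z := by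
  have h := (((hasDerivAt_id z).pow 2).const_mul (-(1 / 2) : ℝ)).exp.neg
  refine h.congr_deriv ?_
  simp only [Pi.pow_apply, id, Nat.cast_ofNat, mul_one]
  ring

lemma integral_sign_mul_exp (a : ℝ) :
    ∫ z : ℝ, (if a < z then (1 : ℝ) else -1) * (z * exp (-(1 / 2) * z ^ 2))
      = 2 * exp (-(1 / 2) * a ^ 2) := by
  have hint : Integrable (fun z : ℝ => z * exp (-(1 / 2) * z ^ 2)) :=
    integrable_mul_exp_neg_mul_sq (by norm_num)
  have hm : Measurable (fun z : ℝ => if a < z then (1 : ℝ) else -1) :=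
    Measurable.ite measurableSet_Ioi measurable_const measurable_const
  have hint' : Integrable (fun z : ℝ =>
      (if a < z then (1 : ℝ) else -1) * (z * exp (-(1 / 2) * z ^ 2))) := by
    refine hint.bdd_mul (c := 1) hm.aestronglyMeasurable (.of_forall fun z => ?_)
    split_ifs <;> simp
  have hbot : Filter.Tendsto (fun z : ℝ => -exp (-(1 / 2) * z ^ 2)) Filter.atBot (nhds 0) := by
    suffices h : Filter.Tendsto (fun z : ℝ => -(1 / 2) * z ^ 2) Filter.atBot Filter.atBot by
      simpa using (tendsto_exp_atBot.comp h).neg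
    have h2 : Filter.Tendsto (fun z : ℝ => z ^ 2) Filter.atBot Filter.atTop :=
      ((Filter.tendsto_pow_atTop two_ne_zero).comp Filter.tendsto_neg_atBot_atTop).congr
        fun z => by simp
    exact h2.const_mul_atTop_of_neg (by norm_num)
  have htop : Filter.Tendsto (fun z : ℝ => -exp (-(1 / 2) * z ^ 2)) Filter.atTop (nhds 0) := by
    suffices h : Filter.Tendsto (fun z : ℝ => -(1 / 2) * z ^ 2) Filter.atTop Filter.atBot by
      simpa using (tendsto_exp_atBot.comp h).neg
    have h2 : Filter.Tendsto (fun z : ℝ => z ^ 2) Filter.atTop Filter.atTop :=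
      Filter.tendsto_pow_atTop two_ne_zero
    exact h2.const_mul_atTop_of_neg (by norm_num)
  rw [← integral_add_compl (measurableSet_Ioi (a := a)) hint', Set.compl_Ioi]
  have h1 : ∫ z in Set.Ioi a, (if a < z then (1 : ℝ) else -1) * (z * exp (-(1 / 2) * z ^ 2))
      = exp (-(1 / 2) * a ^ 2) := by
    rw [setIntegral_congr_fun (g := fun z => z * exp (-(1 / 2) * z ^ 2)) measurableSet_Ioi
      (fun z hz => by simp [Set.mem_Ioi.mp hz])]
    rw [integral_Ioi_of_hasDerivAt_of_tendsto' (fun z _ => hasDerivAt_neg_exp z)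
      hint.integrableOn htop]
    ring
  have h2 : ∫ z in Set.Iic a, (if a < z then (1 : ℝ) else -1) * (z * exp (-(1 / 2) * z ^ 2))
      = exp (-(1 / 2) * a ^ 2) := by
    rw [setIntegral_congr_fun (g := fun z => -(z * exp (-(1 / 2) * z ^ 2))) measurableSet_Iic
      (fun z hz => by simp [not_lt.mpr (Set.mem_Iic.mp hz)])]
    rw [integral_neg, integral_Iic_of_hasDerivAt_of_tendsto' (fun z _ => hasDerivAt_neg_exp z)
      hint.integrableOn hbot]
    ring
  rw [h1, h2]; ring

/-- `E[Z sign(r Z + c)] = 2 φ(c / r)` for `Z` standard Gaussian with density `φ`. The sign takes the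
value `-1` at `0`, which only affects a null set. -/
lemma integral_sign_gaussian {r : ℝ} (hr : 0 < r) (c : ℝ) :
    ∫ z, (if 0 < r * z + c then (1 : ℝ) else -1) * z ∂(gaussianReal 0 1)
      = √(2 / π) * exp (-c ^ 2 / (2 * r ^ 2)) := by
  rw [integral_gaussianReal_eq_integral_smul one_ne_zero]
  have h : ∀ z : ℝ, gaussianPDFReal 0 1 z • ((if 0 < r * z + c then (1 : ℝ) else -1) * z)
      = (√(2 * π))⁻¹ *
        ((if -c / r < z then (1 : ℝ) else -1) * (z * exp (-(1 / 2) * z ^ 2))) := by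
    intro z
    have hiff : 0 < r * z + c ↔ -c / r < z := by
      rw [div_lt_iff₀ hr]; constructor <;> intro h <;> linarith
    simp only [hiff, gaussianPDFReal, smul_eq_mul]
    have : -(z - 0) ^ 2 / (2 * ((1 : NNReal) : ℝ)) = -(1 / 2) * z ^ 2 := by simp; ring
    rw [this]; simp only [NNReal.coe_one, mul_one]; ring
  simp_rw [h]
  rw [integral_const_mul, integral_sign_mul_exp]
  have e1 : -(1 / 2) * (-c / r) ^ 2 = -c ^ 2 / (2 * r ^ 2) := by field_simp
  have e2 : (√(2 * π))⁻¹ * 2 = √(2 / π) := by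
    rw [Real.sqrt_mul (by norm_num), Real.sqrt_div (by norm_num), mul_inv]
    have := Real.mul_self_sqrt (show (0 : ℝ) ≤ 2 by norm_num)
    have h2 : √(2 : ℝ) ≠ 0 := by positivity
    have h3 : √π ≠ 0 := by positivity
    field_simp
    nlinarith
  rw [e1, ← mul_assoc, e2]

/-- The tangent line inequality for the convex function `r ↦ |r z + c|` at `r₀`. -/
lemma abs_subgradient (r r₀ z c : ℝ) :
    |r₀ * z + c| + (r - r₀) * ((if 0 < r₀ * z + c then (1 : ℝ) else -1) * z) ≤ |r * z + c| := by
  split_ifs with h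
  · rw [abs_of_pos h]; have := le_abs_self (r * z + c); linarith
  · rw [abs_of_nonpos (not_lt.mp h)]; have := neg_abs_le (r * z + c); linarith

lemma integrable_affine (ν : Measure ℝ) [IsProbabilityMeasure ν]
    (hν : Integrable (fun c : ℝ => c) ν) (r : ℝ) :
    Integrable (fun p : ℝ × ℝ => r * p.1 + p.2) ((gaussianReal 0 1).prod ν) := by
  have h0 : Integrable (fun z : ℝ => z) (gaussianReal 0 1) :=
    memLp_one_iff_integrable.mp (memLp_id_gaussianReal 1)
  exact ((h0.comp_fst ν).const_mul r).add (hν.comp_snd (gaussianReal 0 1))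

/-- Tangent line inequality at `r₀` for `r ↦ E|r Z + b|`, where `b ∼ ν` is independent of the
standard Gaussian `Z`. -/
lemma gaussian_abs_gap (ν : Measure ℝ) [IsProbabilityMeasure ν]
    (hν : Integrable (fun c : ℝ => c) ν) {r r₀ : ℝ} (hr₀ : 0 < r₀) :
    (r - r₀) * (√(2 / π) * ∫ c, exp (-c ^ 2 / (2 * r₀ ^ 2)) ∂ν) ≤
      ∫ p : ℝ × ℝ, |r * p.1 + p.2| ∂((gaussianReal 0 1).prod ν)
        - ∫ p : ℝ × ℝ, |r₀ * p.1 + p.2| ∂((gaussianReal 0 1).prod ν) := by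
  have h0 : Integrable (fun z : ℝ => z) (gaussianReal 0 1) :=
    memLp_one_iff_integrable.mp (memLp_id_gaussianReal 1)
  have hs : Integrable (fun p : ℝ × ℝ => (if 0 < r₀ * p.1 + p.2 then (1 : ℝ) else -1) * p.1)
      ((gaussianReal 0 1).prod ν) := by
    refine (h0.comp_fst ν).bdd_mul (c := 1) ?_ (.of_forall fun z => ?_)
    · exact (Measurable.ite (measurableSet_lt measurable_const (by fun_prop))
        measurable_const measurable_const).aestronglyMeasurable
    · split_ifs <;> simp
  have hval : ∫ p : ℝ × ℝ, (if 0 < r₀ * p.1 + p.2 then (1 : ℝ) else -1) * p.1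
      ∂((gaussianReal 0 1).prod ν) = √(2 / π) * ∫ c, exp (-c ^ 2 / (2 * r₀ ^ 2)) ∂ν := by
    rw [integral_prod_symm _ hs]
    simp_rw [integral_sign_gaussian hr₀]
    rw [integral_const_mul]
  rw [← hval, ← integral_const_mul, le_sub_iff_add_le, add_comm,
    ← integral_add (integrable_affine ν hν r₀).abs (hs.const_mul _)]
  exact integral_mono ((integrable_affine ν hν r₀).abs.add (hs.const_mul _))
    (integrable_affine ν hν r).abs fun p => abs_subgradient r r₀ p.1 p.2

/-- A variable `u ∼ N(0, r²)` independent of `b` may be replaced by `r Z`, `Z` standard Gaussian, on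
the product space. -/
lemma integral_abs_add_eq {Ω : Type} [MeasurableSpace Ω] (P : Measure Ω) [IsProbabilityMeasure P]
    (u b : Ω → ℝ) (hu : Measurable u) (hb : Measurable b) (hub : IndepFun u b P) {r : ℝ}
    (hlaw : P.map u = gaussianReal 0 (Real.toNNReal (r ^ 2))) :
    ∫ ω, |u ω + b ω| ∂P
      = ∫ p : ℝ × ℝ, |r * p.1 + p.2| ∂((gaussianReal 0 1).prod (P.map b)) := by
  have := Measure.isProbabilityMeasure_map (μ := P) hb.aemeasurable
  have h1 : P.map (fun ω => (u ω, b ω))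
      = ((gaussianReal 0 1).prod (P.map b)).map (Prod.map (r * ·) id) := by
    rw [(indepFun_iff_map_prod_eq_prod_map_map hu.aemeasurable hb.aemeasurable).mp hub,
      ← Measure.map_prod_map _ _ (by fun_prop) measurable_id, Measure.map_id,
      gaussianReal_map_const_mul, hlaw]
    congr 2
    · simp
    · ext; simp [sq_nonneg]
  have hm : Measurable (fun p : ℝ × ℝ => |p.1 + p.2|) := by fun_prop
  have h2 := integral_map (μ := P) (hu.prodMk hb).aemeasurable hm.aestronglyMeasurable
  rw [← h2, h1, integral_map (by fun_prop) hm.aestronglyMeasurable]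
  rfl

lemma inner_toEuclideanLin_nonneg {d : ℕ} {H : Matrix (Fin d) (Fin d) ℝ} (hH : H.PosDef)
    (v : Vec d) : 0 ≤ ⟪v, Matrix.toEuclideanLin H v⟫ := by
  have h := hH.posSemidef.dotProduct_mulVec_nonneg v.ofLp
  rw [EuclideanSpace.inner_eq_star_dotProduct, dotProduct_comm]
  simpa [Matrix.toEuclideanLin] using h

/-- `f(θ) = E|r Z + b|` with `r = √(σ² + ‖θ - θ*‖²_H)` and `Z` standard Gaussian independent of
`b`. -/
lemma fLoss_eq {d : ℕ} {Ω : Type} [MeasurableSpace Ω] (P : Measure Ω) [IsProbabilityMeasure P]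
    (θs : Vec d) (H : Matrix (Fin d) (Fin d) ℝ) (hH : H.PosDef) (σ : ℝ)
    (x : Ω → Vec d) (ε b : Ω → ℝ)
    (hxm : Measurable x) (hεm : Measurable ε) (hbm : Measurable b)
    (hxg : ∀ v : Vec d, Measure.map (fun ω => ⟪v, x ω⟫) P
        = gaussianReal 0 (Real.toNNReal ⟪v, Matrix.toEuclideanLin H v⟫))
    (hεg : Measure.map ε P = gaussianReal 0 (Real.toNNReal (σ ^ 2)))
    (hind1 : IndepFun x ε P) (hind2 : IndepFun (fun ω => (x ω, ε ω)) b P) (θ : Vec d) :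
    fLoss P x ε b θs θ
      = ∫ p : ℝ × ℝ, |√(σ ^ 2 + ⟪θ - θs, Matrix.toEuclideanLin H (θ - θs)⟫) * p.1 + p.2|
          ∂((gaussianReal 0 1).prod (P.map b)) := by
  have hq := inner_toEuclideanLin_nonneg hH (θ - θs)
  set u : Ω → ℝ := (fun ω => ⟪θs - θ, x ω⟫) + ε with hu
  have hum : Measurable u := by fun_prop
  have hlaw : P.map u = gaussianReal 0
      (Real.toNNReal (√(σ ^ 2 + ⟪θ - θs, Matrix.toEuclideanLin H (θ - θs)⟫) ^ 2)) := by
    have hi : IndepFun (fun ω => ⟪θs - θ, x ω⟫) ε P :=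
      hind1.comp (φ := fun v : Vec d => ⟪θs - θ, v⟫) (ψ := id) (by fun_prop) measurable_id
    rw [hu, gaussianReal_add_gaussianReal_of_indepFun hi (hxg _) hεg,
      Real.sq_sqrt (by positivity), add_zero, ← neg_sub θ θs, map_neg, inner_neg_neg,
      ← Real.toNNReal_add hq (sq_nonneg σ), add_comm]
  have hub : IndepFun u b P :=
    hind2.comp (φ := fun p : Vec d × ℝ => ⟪θs - θ, p.1⟫ + p.2) (ψ := id)
      (by fun_prop) measurable_id
  rw [← integral_abs_add_eq P u b hum hbm hub hlaw, fLoss]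
  refine integral_congr_ae (.of_forall fun ω => ?_)
  simp only [hu, Pi.add_apply, inner_sub_left, real_inner_comm (x ω)]
  congr 1; ring

/-- Inverts the bound `D ≥ √(2/π) A (r - σ)`, `r = √(σ² + q)`, into a bound on `q`. -/
lemma sq_le_of_gap {σ A D q : ℝ} (hσ : 0 < σ) (hA : 0 < A) (hq : 0 ≤ q)
    (h : (√(σ ^ 2 + q) - σ) * (√(2 / π) * A) ≤ D) :
    0 ≤ D ∧ q ≤ 4 * σ / A * D + 10 / A ^ 2 * D ^ 2 := by
  set r := √(σ ^ 2 + q) with hr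
  have hr2 : r ^ 2 = σ ^ 2 + q := Real.sq_sqrt (by positivity)
  have hr0 : σ ≤ r := Real.le_sqrt_of_sq_le (by linarith)
  have hc : 1 / 2 ≤ √(2 / π) := by
    apply Real.le_sqrt_of_sq_le
    rw [le_div_iff₀ pi_pos]; linarith [pi_le_four]
  have h1 : (r - σ) * A ≤ 2 * D := by
    nlinarith [mul_nonneg (mul_nonneg (sub_nonneg.2 hr0) hA.le) (sub_nonneg.2 hc)]
  have h2 : r - σ ≤ 2 * (D / A) := by
    rw [← mul_div_assoc, le_div_iff₀ hA]; exact h1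
  have hD : 0 ≤ D := by nlinarith [mul_nonneg (sub_nonneg.2 hr0) hA.le]
  have ht : 0 ≤ D / A := by positivity
  refine ⟨hD, ?_⟩
  have e : 4 * σ / A * D + 10 / A ^ 2 * D ^ 2 = 4 * σ * (D / A) + 10 * (D / A) ^ 2 := by
    field_simp
  rw [e]
  nlinarith [mul_nonneg (sub_nonneg.2 hr0) (sub_nonneg.2 h2), mul_nonneg ht (sub_nonneg.2 h2)]


theorem stmt14 {d : ℕ} (hd : 1 ≤ d)
    {Ω : Type} [MeasurableSpace Ω] (P : Measure Ω) [IsProbabilityMeasure P]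
    (θs : Vec d) (H : Matrix (Fin d) (Fin d) ℝ) (hH : H.PosDef)
    (σ η : ℝ) (hσ : 0 < σ) (hη0 : 0 ≤ η) (hη1 : η < 1)
    (x : Ω → Vec d) (ε b : Ω → ℝ)
    (hxm : Measurable x) (hεm : Measurable ε) (hbm : Measurable b)
    (hxg : ∀ v : Vec d, Measure.map (fun ω => ⟪v, x ω⟫) P
        = gaussianReal 0 (Real.toNNReal ⟪v, Matrix.toEuclideanLin H v⟫))
    (hεg : Measure.map ε P = gaussianReal 0 (Real.toNNReal (σ ^ 2)))
    (hbη : P {ω | b ω ≠ 0} = ENNReal.ofReal η)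
    (hbi : Integrable b P)
    (hind1 : IndepFun x ε P)
    (hind2 : IndepFun (fun ω => (x ω, ε ω)) b P)
    {Ω₂ : Type} [MeasurableSpace Ω₂] (P₂ : Measure Ω₂) [IsProbabilityMeasure P₂]
    (Θ : Ω₂ → Vec d) (hΘ : Measurable Θ):
    ∫⁻ ω, ENNReal.ofReal ⟪Θ ω - θs, Matrix.toEuclideanLin H (Θ ω - θs)⟫ ∂P₂
      ≤ ENNReal.ofReal (4 * σ / (1 - etaT P b σ)) *
          ∫⁻ ω, ENNReal.ofReal (fLoss P x ε b θs (Θ ω) - fLoss P x ε b θs θs) ∂P₂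
        + ENNReal.ofReal (10 / (1 - etaT P b σ) ^ 2) *
          ∫⁻ ω, ENNReal.ofReal ((fLoss P x ε b θs (Θ ω) - fLoss P x ε b θs θs) ^ 2) ∂P₂ := by
  set A : ℝ := 1 - etaT P b σ with hAdef
  have hA : A = ∫ ω, exp (-(b ω) ^ 2 / (2 * σ ^ 2)) ∂P := by simp [hAdef, etaT]
  have hAi : Integrable (fun ω => exp (-(b ω) ^ 2 / (2 * σ ^ 2))) P := by
    refine Integrable.of_bound (by fun_prop) 1 (.of_forall fun ω => ?_)
    rw [norm_of_nonneg (exp_pos _).le, exp_le_one_iff, neg_div]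
    exact neg_nonpos.2 (by positivity)
  have hA0 : 0 < A := hA ▸ integral_exp_pos hAi
  have hAmap : ∫ c, exp (-c ^ 2 / (2 * σ ^ 2)) ∂(P.map b) = A := by
    rw [hA, integral_map hbm.aemeasurable (by fun_prop)]
  have := Measure.isProbabilityMeasure_map (μ := P) hbm.aemeasurable
  have hbi' : Integrable (fun c : ℝ => c) (P.map b) :=
    (integrable_map_measure (by fun_prop) hbm.aemeasurable).2 hbi
  have hf := fLoss_eq P θs H hH σ x ε b hxm hεm hbm hxg hεg hind1 hind2
  have hpt : ∀ θ : Vec d, 0 ≤ fLoss P x ε b θs θ - fLoss P x ε b θs θs ∧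
      ⟪θ - θs, Matrix.toEuclideanLin H (θ - θs)⟫ ≤
        4 * σ / A * (fLoss P x ε b θs θ - fLoss P x ε b θs θs)
          + 10 / A ^ 2 * (fLoss P x ε b θs θ - fLoss P x ε b θs θs) ^ 2 := by
    intro θ
    apply sq_le_of_gap hσ hA0 (inner_toEuclideanLin_nonneg hH _)
    have hg := gaussian_abs_gap (P.map b) hbi' (r₀ := σ)
      (r := √(σ ^ 2 + ⟪θ - θs, Matrix.toEuclideanLin H (θ - θs)⟫)) hσ
    rw [hAmap, ← hf θ] at hg
    have h0 := hf θs
    rw [sub_self, inner_zero_left, add_zero, Real.sqrt_sq hσ.le] at h0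
    rwa [← h0] at hg
  -- Additivity of `∫⁻` over the two terms on the right requires `f` to be measurable.
  have hmeas : Measurable (fun θ : Vec d => fLoss P x ε b θs θ) := by
    apply StronglyMeasurable.measurable
    apply StronglyMeasurable.integral_prod_right
    apply Measurable.stronglyMeasurable
    simp only [Function.uncurry_def]
    fun_prop
  have hmD : Measurable fun ω => ENNReal.ofReal (fLoss P x ε b θs (Θ ω) - fLoss P x ε b θs θs) :=
    ((hmeas.comp hΘ).sub_const _).ennreal_ofReal
  rw [← lintegral_const_mul' _ _ ENNReal.ofReal_ne_top,
    ← lintegral_const_mul' _ _ ENNReal.ofReal_ne_top,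
    ← lintegral_add_left (hmD.const_mul _)]
  refine lintegral_mono fun ω => ?_
  obtain ⟨hD, hle⟩ := hpt (Θ ω)
  rw [← ENNReal.ofReal_mul (by positivity), ← ENNReal.ofReal_mul (by positivity),
    ← ENNReal.ofReal_add (by positivity) (by positivity)]
  exact ENNReal.ofReal_le_ofReal hle
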